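/- Over the two-letter alphabet {a,b}, the language L' = {aⁿ b^{m+1} a² bⁿ a^{m+1} | n, m ≥ 1} is not context-free. -/

import Mathlib

namespace ContextFreeGrammar

variable {T : Type*} {g : ContextFreeGrammar T}

/-- `g.Parses s w` means that the string `s` has a forest of parse trees with yield `w`. -/
inductive Parses (g : ContextFreeGrammar T) : List (Symbol T g.NT) → List T → Prop
  | nil : Parses g [] []
  | terminal (t : T) {s : List (Symbol T g.NT)} {w : List T} (hs : Parses g s w) :
      Parses g (.terminal t :: s) (t :: w)
  | nonterminal {r : ContextFreeRule T g.NT} (hr : r ∈ g.rules) {s : List (Symbol T g.NT)}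
      {u w : List T} (ho : Parses g r.output u) (hs : Parses g s w) :
      Parses g (.nonterminal r.input :: s) (u ++ w)

/-- `g.ParsesAvoiding F s w` means that `s` has a forest of parse trees with yield `w` in which
no nonterminal lies in `F` or repeats along a branch. -/
inductive ParsesAvoiding (g : ContextFreeGrammar T) :
    Set g.NT → List (Symbol T g.NT) → List T → Prop
  | nil (F : Set g.NT) : ParsesAvoiding g F [] []
  | terminal (t : T) {F : Set g.NT} {s : List (Symbol T g.NT)} {w : List T}
      (hs : ParsesAvoiding g F s w) : ParsesAvoiding g F (.terminal t :: s) (t :: w)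
  | nonterminal {r : ContextFreeRule T g.NT} (hr : r ∈ g.rules) {F : Set g.NT}
      (hF : r.input ∉ F) {s : List (Symbol T g.NT)} {u w : List T}
      (ho : ParsesAvoiding g (insert r.input F) r.output u) (hs : ParsesAvoiding g F s w) :
      ParsesAvoiding g F (.nonterminal r.input :: s) (u ++ w)

lemma parses_map_terminal (w : List T) : g.Parses (w.map .terminal) w := by
  induction w with
  | nil => exact .nil
  | cons t w ih => exact .terminal t ih

lemma Parses.append {s₁ s₂ : List (Symbol T g.NT)} {w₁ w₂ : List T}
    (h₁ : g.Parses s₁ w₁) (h₂ : g.Parses s₂ w₂) : g.Parses (s₁ ++ s₂) (w₁ ++ w₂) := by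
  induction h₁ with
  | nil => exact h₂
  | terminal t _ ih => exact .terminal t ih
  | nonterminal hr ho _ _ ih =>
    rw [List.append_assoc]
    exact .nonterminal hr ho ih

lemma Parses.exists_of_append {s₁ s₂ : List (Symbol T g.NT)} {w : List T}
    (h : g.Parses (s₁ ++ s₂) w) :
    ∃ w₁ w₂, w = w₁ ++ w₂ ∧ g.Parses s₁ w₁ ∧ g.Parses s₂ w₂ := by
  induction s₁ generalizing w with
  | nil => exact ⟨[], w, rfl, .nil, h⟩
  | cons a s₁ ih =>
    rw [List.cons_append] at h
    cases h with
    | terminal t hs =>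
      obtain ⟨w₁, w₂, rfl, h₁, h₂⟩ := ih hs
      exact ⟨t :: w₁, w₂, rfl, .terminal t h₁, h₂⟩
    | @nonterminal r hr _ u _ ho hs =>
      obtain ⟨w₁, w₂, rfl, h₁, h₂⟩ := ih hs
      exact ⟨u ++ w₁, w₂, by simp, .nonterminal hr ho h₁, h₂⟩

lemma Produces.parses {s s' : List (Symbol T g.NT)} {w : List T} (h : g.Produces s s')
    (hw : g.Parses s' w) : g.Parses s w := by
  obtain ⟨r, hr, hrs⟩ := h
  obtain ⟨p, q, rfl, rfl⟩ := hrs.exists_parts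
  obtain ⟨w', w₃, rfl, h', h₃⟩ := hw.exists_of_append
  obtain ⟨w₁, w₂, rfl, h₁, h₂⟩ := h'.exists_of_append
  have h₂' : g.Parses [.nonterminal r.input] (w₂ ++ []) := .nonterminal hr h₂ .nil
  rw [List.append_nil] at h₂'
  exact (h₁.append h₂').append h₃

lemma Derives.parses {s : List (Symbol T g.NT)} {w : List T}
    (h : g.Derives s (w.map .terminal)) : g.Parses s w := by
  induction h using Relation.ReflTransGen.head_induction_on with
  | refl => exact parses_map_terminal w
  | head h _ ih => exact h.parses ih

lemma Derives.append {s₁ s₂ t₁ t₂ : List (Symbol T g.NT)} (h₁ : g.Derives s₁ t₁)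
    (h₂ : g.Derives s₂ t₂) : g.Derives (s₁ ++ s₂) (t₁ ++ t₂) :=
  (h₁.append_right s₂).trans (h₂.append_left t₁)

lemma derives_nonterminal_cons {r : ContextFreeRule T g.NT} (hr : r ∈ g.rules)
    {s t t' : List (Symbol T g.NT)} (ho : g.Derives r.output t) (hs : g.Derives s t') :
    g.Derives (.nonterminal r.input :: s) (t ++ t') :=
  Produces.trans_derives ⟨r, hr, .head s⟩ (ho.append hs)

lemma Parses.derives {s : List (Symbol T g.NT)} {w : List T} (h : g.Parses s w) :
    g.Derives s (w.map .terminal) := by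
  induction h with
  | nil => exact .refl _
  | terminal t _ ih => exact ih.append_left [.terminal t]
  | nonterminal hr _ _ iho ihs =>
    rw [List.map_append]
    exact derives_nonterminal_cons hr iho ihs

namespace ParsesAvoiding

lemma parses {F : Set g.NT} {s : List (Symbol T g.NT)} {w : List T}
    (h : g.ParsesAvoiding F s w) : g.Parses s w := by
  induction h with
  | nil => exact .nil
  | terminal t _ ih => exact .terminal t ih
  | nonterminal hr _ _ _ iho ihs => exact .nonterminal hr iho ihs

lemma mono {F F' : Set g.NT} {s : List (Symbol T g.NT)} {w : List T}
    (h : g.ParsesAvoiding F s w) (hF' : F' ⊆ F) : g.ParsesAvoiding F' s w := by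
  induction h generalizing F' with
  | nil => exact .nil _
  | terminal t _ ih => exact .terminal t (ih hF')
  | nonterminal hr hF _ _ iho ihs =>
    exact .nonterminal hr (fun hmem ↦ hF (hF' hmem)) (iho (Set.insert_subset_insert hF')) (ihs hF')

lemma append {F : Set g.NT} {s₁ s₂ : List (Symbol T g.NT)} {w₁ w₂ : List T}
    (h₁ : g.ParsesAvoiding F s₁ w₁) (h₂ : g.ParsesAvoiding F s₂ w₂) :
    g.ParsesAvoiding F (s₁ ++ s₂) (w₁ ++ w₂) := by
  induction h₁ with
  | nil => exact h₂
  | terminal t _ ih => exact .terminal t (ih h₂)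
  | nonterminal hr hF ho _ _ ih =>
    rw [List.append_assoc]
    exact .nonterminal hr hF ho (ih h₂)

/-- Either `A` can be avoided as well, or it occurs somewhere in the forest. -/
lemma insert_or_exists {F : Set g.NT} {s : List (Symbol T g.NT)} {w : List T}
    (h : g.ParsesAvoiding F s w) (A : g.NT) :
    g.ParsesAvoiding (insert A F) s w ∨ ∃ v z y : List T, w = v ++ z ++ y ∧
      g.Derives s (v.map .terminal ++ [.nonterminal A] ++ y.map .terminal) ∧
      g.ParsesAvoiding ∅ [.nonterminal A] z := by
  induction h with
  | nil => exact .inl (.nil _)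
  | terminal t _ ih =>
    obtain ih | ⟨v, z, y, rfl, hd, hz⟩ := ih
    · exact .inl (.terminal t ih)
    · exact .inr ⟨t :: v, z, y, rfl, hd.append_left [.terminal t], hz⟩
  | @nonterminal r hr F hF s u w ho hs iho ihs =>
    by_cases hA : r.input = A
    · subst hA
      refine .inr ⟨[], u, w, rfl, hs.parses.derives.append_left [_], ?_⟩
      have := ParsesAvoiding.nonterminal hr (Set.notMem_empty _)
        (ho.mono (Set.insert_subset_insert (Set.empty_subset F))) (.nil ∅)
      rwa [List.append_nil] at this
    · obtain iho | ⟨v, z, y, rfl, hd, hz⟩ := iho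
      · obtain ihs | ⟨v, z, y, rfl, hd, hz⟩ := ihs
        · rw [Set.insert_comm] at iho
          exact .inl (.nonterminal hr (by simp [hA, hF]) iho ihs)
        · refine .inr ⟨u ++ v, z, y, by simp, ?_, hz⟩
          simpa using derives_nonterminal_cons hr ho.parses.derives hd
      · refine .inr ⟨v, z, y ++ w, by simp, ?_, hz⟩
        simpa using derives_nonterminal_cons hr hd hs.parses.derives

end ParsesAvoiding

variable (g) in
lemma exists_forall_output_length_le : ∃ M, ∀ r ∈ g.rules, r.output.length ≤ M :=
  ⟨g.rules.sup fun r ↦ r.output.length, fun _ hr ↦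
    Finset.le_sup (f := fun r : ContextFreeRule T g.NT ↦ r.output.length) hr⟩

open Classical in
variable (g) in
lemma exists_length_le_of_card_le (n : ℕ) :
    ∃ c, ∀ F : Set g.NT, (g.rules.filter (·.input ∉ F)).card ≤ n →
      ∀ s w, g.ParsesAvoiding F s w → w.length ≤ c * s.length := by
  obtain ⟨M, hM⟩ := g.exists_forall_output_length_le
  induction n with
  | zero =>
    refine ⟨1, fun F hcard s w h ↦ ?_⟩
    induction h with
    | nil => simp
    | terminal t _ ih => simpa using ih hcard
    | @nonterminal r hr F hF =>
      have : r ∈ g.rules.filter (·.input ∉ F) := by simp [hr, hF]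
      simp_all
  | succ n ihn =>
    obtain ⟨c, hc⟩ := ihn
    refine ⟨1 + c * M, fun F hcard s w h ↦ ?_⟩
    induction h with
    | nil => simp
    | terminal t _ ih =>
      have := ih hcard
      simp only [List.length_cons]
      nlinarith
    | @nonterminal r hr F hF s u w ho _ _ ihs =>
      have hlt : (g.rules.filter (·.input ∉ insert r.input F)).card <
          (g.rules.filter (·.input ∉ F)).card := by
        apply Finset.card_lt_card
        rw [Finset.ssubset_iff_of_subset (Finset.monotone_filter_right _ ?_)]
        · exact ⟨r, by simp [hr, hF], by simp⟩
        · intro r' _ h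
          exact fun hmem ↦ h (Set.mem_insert_of_mem _ hmem)
      have h₁ := hc _ (by convert Nat.le_of_lt_succ (hlt.trans_le hcard)) _ _ ho
      have h₂ := Nat.mul_le_mul_left c (hM r hr)
      have h₃ := ihs hcard
      simp only [List.length_cons, List.length_append]
      nlinarith

variable (g) in
lemma exists_length_le_of_parsesAvoiding :
    ∃ c, ∀ s w, g.ParsesAvoiding ∅ s w → w.length ≤ c * s.length :=
  (g.exists_length_le_of_card_le _).imp fun _ hc ↦ hc ∅ le_rfl

/-- The word `w` derived from `s` can be pumped inside a factor of length at most `p`. -/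
def Pumpable (g : ContextFreeGrammar T) (p : ℕ) (s : List (Symbol T g.NT)) (w : List T) : Prop :=
  ∃ x v z y u : List T, w = x ++ v ++ z ++ y ++ u ∧ (v ++ z ++ y).length ≤ p ∧ v ++ y ≠ [] ∧
    ∀ i, g.Derives s ((x ++ (List.replicate i v).flatten ++ z ++
      (List.replicate i y).flatten ++ u).map .terminal)

lemma Pumpable.of_derives_context {p : ℕ} {s s' : List (Symbol T g.NT)} {w : List T}
    (h : g.Pumpable p s w) (a b : List T)
    (hs : g.Derives s' (a.map .terminal ++ s ++ b.map .terminal)) :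
    g.Pumpable p s' (a ++ w ++ b) := by
  obtain ⟨x, v, z, y, u, rfl, hp, hne, hd⟩ := h
  refine ⟨a ++ x, v, z, y, u ++ b, by simp, hp, hne, fun i ↦ hs.trans ?_⟩
  simpa using ((hd i).append_left (a.map .terminal)).append_right (b.map .terminal)

lemma Derives.iterate {A : g.NT} {v y : List T}
    (h : g.Derives [.nonterminal A] (v.map .terminal ++ [.nonterminal A] ++ y.map .terminal))
    (i : ℕ) : g.Derives [.nonterminal A] ((List.replicate i v).flatten.map .terminal ++
      [.nonterminal A] ++ (List.replicate i y).flatten.map .terminal) := by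
  induction i with
  | zero => exact .refl _
  | succ i ih =>
    rw [List.replicate_succ, List.replicate_succ' (a := y)]
    refine h.trans ?_
    simpa using (ih.append_left (v.map .terminal)).append_right (y.map .terminal)

lemma Parses.parsesAvoiding_or_pumpable {c M : ℕ}
    (hc : ∀ s w, g.ParsesAvoiding ∅ s w → w.length ≤ c * s.length)
    (hM : ∀ r ∈ g.rules, r.output.length ≤ M) {s : List (Symbol T g.NT)} {w : List T}
    (h : g.Parses s w) : g.ParsesAvoiding ∅ s w ∨ g.Pumpable (c * M) s w := by
  induction h with
  | nil => exact .inl (.nil _)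
  | terminal t _ ih =>
    refine ih.imp (.terminal t) fun h ↦ ?_
    simpa using h.of_derives_context [t] [] (by simpa using Derives.refl _)
  | @nonterminal r hr s u w ho hs iho ihs =>
    obtain iho | iho := iho
    swap
    · exact .inr <| iho.of_derives_context [] w <|
        by simpa using derives_nonterminal_cons hr (.refl _) hs.derives
    obtain ihs | ihs := ihs
    swap
    · refine .inr ?_
      simpa using ihs.of_derives_context u [] <|
        by simpa using derives_nonterminal_cons hr ho.derives (.refl _)
    obtain h | ⟨v, z, y, rfl, hd, hz⟩ := iho.insert_or_exists r.input
    · exact .inl (.nonterminal hr (Set.notMem_empty _) h ihs)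
    by_cases hne : v ++ y = []
    · obtain ⟨rfl, rfl⟩ := List.append_eq_nil_iff.mp hne
      simpa using Or.inl (hz.append ihs)
    · refine .inr ⟨[], v, z, y, w, by simp,
        (hc _ _ iho).trans (Nat.mul_le_mul_left c (hM r hr)), hne, fun i ↦ ?_⟩
      have hA : g.Derives [.nonterminal r.input]
          (v.map .terminal ++ [.nonterminal r.input] ++ y.map .terminal) := by
        simpa using derives_nonterminal_cons hr hd (.refl [])
      have hi := (hA.iterate i).trans
        ((hz.parses.derives.append_left _).append_right _)
      simpa using hi.append hs.derives

end ContextFreeGrammar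

/-- The pumping lemma for context-free languages. -/
theorem Language.IsContextFree.pumping_lemma {T : Type*} {L : Language T}
    (hL : L.IsContextFree) :
    ∃ p, ∀ w ∈ L, p ≤ w.length → ∃ x v z y u : List T, w = x ++ v ++ z ++ y ++ u ∧
      (v ++ z ++ y).length ≤ p ∧ v ++ y ≠ [] ∧
      ∀ i, x ++ (List.replicate i v).flatten ++ z ++ (List.replicate i y).flatten ++ u ∈ L := by
  obtain ⟨g, rfl⟩ := hL
  obtain ⟨c, hc⟩ := g.exists_length_le_of_parsesAvoiding
  obtain ⟨M, hM⟩ := g.exists_forall_output_length_le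
  refine ⟨c * M + c + 1, fun w hw hlen ↦ ?_⟩
  obtain h | ⟨x, v, z, y, u, hw, hp, hne, hd⟩ :=
    (ContextFreeGrammar.Derives.parses hw).parsesAvoiding_or_pumpable hc hM
  · have := hc _ _ h
    simp only [List.length_singleton] at this
    omega
  · exact ⟨x, v, z, y, u, hw, by omega, hne, hd⟩

/-- The word `aⁿ bᵏ a² bⁿ aᵏ`, with `a = false` and `b = true`. -/
def crossWord (n k : ℕ) : List Bool :=
  List.replicate n false ++ List.replicate k true ++ List.replicate 2 false ++
    List.replicate n true ++ List.replicate k false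

lemma length_crossWord (n k : ℕ) : (crossWord n k).length = 2 * n + 2 * k + 2 := by
  simp only [crossWord, List.length_append, List.length_replicate]
  omega

lemma reverse_crossWord (n k : ℕ) : (crossWord n k).reverse = crossWord k n := by
  simp [crossWord]

lemma getElem?_crossWord (n k i : ℕ) : (crossWord n k)[i]? =
    if i < n then some false else if i < n + k then some true
    else if i < n + k + 2 then some false else if i < 2 * n + k + 2 then some true
    else if i < 2 * n + 2 * k + 2 then some false else none := by
  simp only [crossWord, List.getElem?_append, List.getElem?_replicate, List.length_append,
    List.length_replicate]
  grind

lemma getElem?_crossWord_eq_of_prefix {x : List Bool} {n k n' k' i : ℕ}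
    (h : x <+: crossWord n k) (h' : x <+: crossWord n' k') (hi : i < x.length) :
    (crossWord n k)[i]? = (crossWord n' k')[i]? := by
  obtain ⟨t, ht⟩ := h
  obtain ⟨t', ht'⟩ := h'
  rw [← ht, ← ht', List.getElem?_append_left hi, List.getElem?_append_left hi]

lemma left_eq_of_prefix_crossWord {x : List Bool} {n k N : ℕ} (hk : 0 < k) (hN : 0 < N)
    (h : x <+: crossWord n k) (h' : x <+: crossWord N N) (hx : N < x.length) : n = N := by
  have h₁ := getElem?_crossWord_eq_of_prefix h h' (i := min n N) (by omega)
  simp only [getElem?_crossWord] at h₁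
  grind

lemma right_eq_of_prefix_crossWord {x : List Bool} {k N : ℕ}
    (h : x <+: crossWord N k) (h' : x <+: crossWord N N) (hx : 2 * N < x.length) : k = N := by
  have h₁ := getElem?_crossWord_eq_of_prefix h h' (i := N + min k N) (by omega)
  simp only [getElem?_crossWord] at h₁
  grind

/-- A common prefix and a common suffix missing fewer than `N` letters determine the word. -/
lemma eq_of_prefix_of_suffix_crossWord {x u : List Bool} {n k N : ℕ} (hn : 0 < n) (hk : 0 < k)
    (hx : x <+: crossWord n k) (hx' : x <+: crossWord N N)
    (hu : u <:+ crossWord n k) (hu' : u <:+ crossWord N N)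
    (hlen : 3 * N + 4 ≤ x.length + u.length) (hN : 0 < N) : n = N ∧ k = N := by
  rw [← List.reverse_prefix, reverse_crossWord] at hu hu'
  have hux := u.length_reverse
  by_cases h₁ : 2 * N < x.length
  · obtain rfl := left_eq_of_prefix_crossWord hk hN hx hx' (by omega)
    exact ⟨rfl, right_eq_of_prefix_crossWord hx hx' h₁⟩
  by_cases h₂ : 2 * N < u.length
  · obtain rfl := left_eq_of_prefix_crossWord hn hN hu hu' (by omega)
    exact ⟨right_eq_of_prefix_crossWord hu hu' (by omega), rfl⟩
  exact ⟨left_eq_of_prefix_crossWord hk hN hx hx' (by omega),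
    left_eq_of_prefix_crossWord hn hN hu hu' (by omega)⟩

/-- with `a = false`, `b = true`, the language
`L' = {aⁿ b^{m+1} a² bⁿ a^{m+1} | n, m ≥ 1}` is not context-free. -/
theorem stmt_9 :
    ¬ Language.IsContextFree
      {w : List Bool | ∃ n m : ℕ, 1 ≤ n ∧ 1 ≤ m ∧
        w = List.replicate n false ++ List.replicate (m + 1) true ++
            List.replicate 2 false ++ List.replicate n true ++
            List.replicate (m + 1) false} := by
  intro hL
  obtain ⟨p, hp⟩ := hL.pumping_lemma
  obtain ⟨x, v, z, y, u, hw, hlen, hne, hpump⟩ := hp (crossWord (p + 2) (p + 2))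
    ⟨p + 2, p + 1, by omega, by omega, rfl⟩ (by rw [length_crossWord]; omega)
  obtain ⟨n, m, hn, hm, hnm⟩ := hpump 0
  change _ = crossWord n (m + 1) at hnm
  simp only [List.replicate_zero, List.flatten_nil, List.append_nil] at hnm
  have hlw := congrArg List.length hw
  have hlnm := congrArg List.length hnm
  have hvy := List.length_pos_of_ne_nil hne
  simp only [length_crossWord, List.length_append] at hlw hlnm hlen hvy
  have := eq_of_prefix_of_suffix_crossWord (x := x) (u := u) (N := p + 2) hn m.succ_pos
    ⟨z ++ u, by rw [← hnm]; simp⟩ ⟨v ++ z ++ y ++ u, by rw [hw]; simp⟩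
    ⟨x ++ z, by rw [← hnm]⟩ ⟨x ++ v ++ z ++ y, by rw [hw]⟩ (by omega) (by omega)
  omega
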